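/- arXiv:1609.07670 — 2 statements merged into one kernel-verified Lean document; each statement's English description precedes it below -/
import Mathlib

section
/- There is a constant c > 0 such that for all integers a, b ≥ 2, the ordered Ramsey number of squares of paths satisfies r(P_a^2, P_b^2) ≤ c · (a·b)^{9.7435}. -/
/-!
Fix a coloring with no red `P_a^2` and no blue `P_b^2`, and give every edge `x < y` the label
`lam x y`, the largest `n` such that some monochromatic square of a path on `n + 2` vertices, in
the color of the edge, ends with `x, y`. Red labels are below `a - 2`, blue labels below `b - 2`,
and `lam x y < lam y z` for every monochromatic triangle `x < y < z`.

Suppose the red labels on a vertex set `S` lie in an interval of length `2 ^ i - 1` and the blue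
ones in an interval of length `2 ^ j - 1`. Let `t` be the midpoint of the red interval. If all
edges from `x` to a set `Y` are red with label at least `t`, then the red labels inside `Y` are
above `t`; if all edges from a set `X` to `z` are red with label at most `t`, then the red labels
inside `X` are below `t`. The same holds for blue. Every edge is of one of these four kinds, so by
averaging some vertex has at least `(|S| - 1) / 8` neighbors of one kind. Passing to such a
neighborhood decreases `i + j` by one, hence `|S| < 2 * 8 ^ (i + j)` (`card_lt_of_labels`).
The base case is a monochromatic clique, along which labels increase (`card_le_of_mono`).
With `2 ^ i < 2 * a` and `2 ^ j < 2 * b` this yields `r(P_a^2, P_b^2) ≤ 128 * (a * b) ^ 3`.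
-/

/-!
Colorings are maps from finite sets of naturals to `Bool`,
with `true` = red and `false` = blue.  All structures live inside
the vertex set `{1, ..., N}`, i.e. `Finset.Icc 1 N`.
-/

/-- A blue ordered copy of the `k`-uniform tight path on `n` vertices inside `{1,...,N}`:
a strictly increasing sequence `x 0 < x 1 < ⋯ < x (n-1)` of elements of `{1,...,N}`
all of whose consecutive `k`-element windows are blue. -/
def HasBlueTightPath (k n N : ℕ) (χ : Finset ℕ → Bool) : Prop :=
  ∃ x : ℕ → ℕ, StrictMono x ∧ (∀ i < n, x i ∈ Finset.Icc 1 N) ∧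
    ∀ j, j + k ≤ n → χ ((Finset.range k).image fun i => x (j + i)) = false

/-- A red copy of the complete `k`-uniform hypergraph on `s` vertices inside `{1,...,N}`:
a set of `s` vertices all of whose `k`-element subsets are red. -/
def HasRedClique (k s N : ℕ) (χ : Finset ℕ → Bool) : Prop :=
  ∃ S : Finset ℕ, S ⊆ Finset.Icc 1 N ∧ S.card = s ∧
    ∀ e ⊆ S, e.card = k → χ e = true

/-- The Ramsey number `r_k(s, P_n)`. -/
noncomputable def cliquePathRamsey (k s n : ℕ) : ℕ :=
  sInf {N | ∀ χ : Finset ℕ → Bool, HasRedClique k s N χ ∨ HasBlueTightPath k n N χ}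

/-- An ordered copy of the path power `P_m^ℓ` in color `c` inside `{1,...,N}`:
a strictly increasing sequence `x 0 < ⋯ < x (m-1)` in `{1,...,N}` with
`χ {x i, x j} = c` whenever `i < j < m` and `j - i ≤ ℓ`. -/
def HasPowPath (ℓ m N : ℕ) (c : Bool) (χ : Finset ℕ → Bool) : Prop :=
  ∃ x : ℕ → ℕ, StrictMono x ∧ (∀ i < m, x i ∈ Finset.Icc 1 N) ∧
    ∀ i j, i < j → j < m → j - i ≤ ℓ → χ {x i, x j} = c

/-- The ordered Ramsey number `r(P_a^ℓ, P_b^ℓ)`. -/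
noncomputable def powPathRamsey (ℓ a b : ℕ) : ℕ :=
  sInf {N | ∀ χ : Finset ℕ → Bool, HasPowPath ℓ a N true χ ∨ HasPowPath ℓ b N false χ}

/-- A set of `s` vertices inside `{1,...,N}` spanning at least `t` red `k`-element subsets. -/
def HasRedSpread (k s t N : ℕ) (χ : Finset ℕ → Bool) : Prop :=
  ∃ S : Finset ℕ, S ⊆ Finset.Icc 1 N ∧ S.card = s ∧
    t ≤ ((Finset.powersetCard k S).filter fun e => χ e = true).card

/-- The Ramsey number `r_k(s, t; P_n)`. -/
noncomputable def spreadPathRamsey (k s t n : ℕ) : ℕ :=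
  sInf {N | ∀ χ : Finset ℕ → Bool, HasRedSpread k s t N χ ∨ HasBlueTightPath k n N χ}

/-- A set `S` of `k+1` vertices inside `{1,...,N}` spanning at least `t` red `k`-element
subsets, one of which consists of the `k` smallest vertices of `S` (i.e. `S` minus its
maximum element `v`). -/
def HasRedInitialSpread (k t N : ℕ) (χ : Finset ℕ → Bool) : Prop :=
  ∃ S : Finset ℕ, S ⊆ Finset.Icc 1 N ∧ S.card = k + 1 ∧
    (∃ v ∈ S, (∀ u ∈ S, u ≤ v) ∧ χ (S.erase v) = true) ∧
    t ≤ ((Finset.powersetCard k S).filter fun e => χ e = true).card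

/-- The Ramsey number `f_k(k+1, t; P_n)`: the minimum `N` such that every coloring of the
`k`-sets of `{1,...,N}` has a blue tight path on `n` vertices or a set of `k+1` vertices
spanning at least `t` red `k`-sets, one of which consists of its `k` smallest vertices. -/
noncomputable def initialSpreadPathRamsey (k t n : ℕ) : ℕ :=
  sInf {N | ∀ χ : Finset ℕ → Bool, HasRedInitialSpread k t N χ ∨ HasBlueTightPath k n N χ}

/-- A blue ordered copy of the `k`-uniform broom `B_{a,m}` inside `{1,...,N}`:
vertices `v 0 < ⋯ < v (a-1) < w 0 < ⋯ < w (m-1)`, every consecutive `k`-window of the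
`v`'s is blue, and (provided `a ≥ k-1`) for each `j` the `k`-set consisting of the last
`k-1` of the `v`'s together with `w j` is blue. -/
def HasBlueBroom (k a m N : ℕ) (χ : Finset ℕ → Bool) : Prop :=
  ∃ v w : ℕ → ℕ, StrictMono v ∧ StrictMono w ∧
    (∀ i < a, v i ∈ Finset.Icc 1 N) ∧ (∀ j < m, w j ∈ Finset.Icc 1 N) ∧
    (∀ i < a, ∀ j < m, v i < w j) ∧
    (∀ j, j + k ≤ a → χ ((Finset.range k).image fun i => v (j + i)) = false) ∧
    (k - 1 ≤ a → ∀ j < m,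
      χ (insert (w j) ((Finset.range (k - 1)).image fun i => v (a - (k - 1) + i))) = false)

/-- The Ramsey number `r_3(4, 3; B_{a,m})` for the `3`-uniform broom. -/
noncomputable def spreadBroomRamsey3 (a m : ℕ) : ℕ :=
  sInf {N | ∀ χ : Finset ℕ → Bool, HasRedSpread 3 4 3 N χ ∨ HasBlueBroom 3 a m N χ}

/-- The tower function: `twr 1 x = x` and `twr (i+1) x = 2 ^ twr i x`. -/
def twr (i x : ℕ) : ℕ := (fun y => 2 ^ y)^[i - 1] x

/-- The real tower function: `rtwr 1 x = x` and `rtwr (i+1) x = 2 ^ rtwr i x`. -/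
noncomputable def rtwr (i : ℕ) (x : ℝ) : ℝ := (fun y => (2 : ℝ) ^ y)^[i - 1] x

/-! ### Edge labels increasing along monochromatic triangles -/

/-- The labels `lam` strictly increase along every monochromatic triangle `x < y < z` of the
edge coloring `col`; both functions are only meaningful on pairs `x < y`. -/
def IncreasingLabels (col : ℕ → ℕ → Bool) (lam : ℕ → ℕ → ℕ) : Prop :=
  ∀ x y z, 0 < x → x < y → y < z → col x y = col x z → col y z = col x z → lam x y < lam y z

/-- In a clique of color `c`, discarding the least vertex discards the least label. -/
lemma card_le_of_mono {col : ℕ → ℕ → Bool} {lam : ℕ → ℕ → ℕ} (h : IncreasingLabels col lam)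
    (c : Bool) (B : ℕ) : ∀ (p : ℕ) (S : Finset ℕ), (∀ x ∈ S, 0 < x) →
      (∀ x ∈ S, ∀ y ∈ S, x < y → col x y = c ∧ p ≤ lam x y ∧ lam x y < p + B) →
      S.card ≤ B + 1 := by
  induction B with
  | zero =>
    intro p S _ hS
    rw [Finset.card_le_one]
    intro x hx y hy
    rcases lt_trichotomy x y with hxy | hxy | hxy
    · have := hS x hx y hy hxy; omega
    · exact hxy
    · have := hS y hy x hx hxy; omega
  | succ B ih =>
    intro p S hpos hS
    rcases S.eq_empty_or_nonempty with rfl | hne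
    · simp
    · have hm := S.min'_mem hne
      set m := S.min' hne
      have hlt : ∀ y ∈ S.erase m, m < y := fun y hy =>
        lt_of_le_of_ne (S.min'_le y (Finset.mem_of_mem_erase hy)) (Finset.ne_of_mem_erase hy).symm
      have hle := ih (p + 1) (S.erase m) (fun x hx => hpos x (Finset.mem_of_mem_erase hx)) (by
        intro y hy z hz hyz
        have hy' := Finset.mem_of_mem_erase hy
        have hz' := Finset.mem_of_mem_erase hz
        have h1 := hS m hm y hy' (hlt y hy)
        have h2 := hS m hm z hz' (hlt z hz)
        have h3 := hS y hy' z hz' hyz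
        have h4 := h m y z (hpos m hm) (hlt y hy) hyz (by rw [h1.1, h2.1]) (by rw [h3.1, h2.1])
        exact ⟨h3.1, by omega, by omega⟩)
      have := Finset.card_erase_add_one hm
      omega

/-- If the pairs `x < y` of `S` are split into two classes, where `r` bounds the out-degree in the
first class and the in-degree in the second, then `|S| ≤ 4 * r + 1`. -/
lemma card_le_of_degrees (S : Finset ℕ) (r : ℕ) (Q : ℕ → ℕ → Prop) [DecidableRel Q]
    (hout : ∀ x ∈ S, (S.filter fun y => x < y ∧ Q x y).card ≤ r)
    (hin : ∀ y ∈ S, (S.filter fun x => x < y ∧ ¬ Q x y).card ≤ r) :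
    S.card ≤ 4 * r + 1 := by
  have e1 : ∑ x ∈ S, (S.filter fun y => x < y).card = ∑ y ∈ S, (S.filter fun x => x < y).card :=
    Finset.sum_card_bipartiteAbove_eq_sum_card_bipartiteBelow (fun x y : ℕ => x < y)
  have e2 : ∑ x ∈ S, (S.filter fun y => x < y ∧ ¬ Q x y).card
      = ∑ y ∈ S, (S.filter fun x => x < y ∧ ¬ Q x y).card :=
    Finset.sum_card_bipartiteAbove_eq_sum_card_bipartiteBelow (fun x y : ℕ => x < y ∧ ¬ Q x y)
  have e3 : ∀ x ∈ S, (S.filter fun y => x < y).card =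
      (S.filter fun y => x < y ∧ Q x y).card + (S.filter fun y => x < y ∧ ¬ Q x y).card := by
    intro x _
    rw [← Finset.filter_filter, ← Finset.filter_filter,
      Finset.card_filter_add_card_filter_not]
  have e4 : ∀ x ∈ S, S.card = (S.filter fun y => x < y).card
      + (S.filter fun y => y < x).card + 1 := by
    intro x hx
    have h1 := Finset.card_filter_add_card_filter_not (s := S) (fun y => x < y)
    have h2 : S.filter (fun y => ¬ x < y) = insert x (S.filter fun y => y < x) := by
      ext y
      simp only [Finset.mem_filter, Finset.mem_insert]
      constructor
      · rintro ⟨h, h'⟩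
        rcases eq_or_lt_of_not_gt h' with h | h
        · exact Or.inl h
        · exact Or.inr ⟨‹_›, h⟩
      · rintro (rfl | ⟨h, h'⟩)
        · exact ⟨hx, lt_irrefl _⟩
        · exact ⟨h, by omega⟩
    rw [h2, Finset.card_insert_of_notMem (by simp)] at h1
    omega
  have s1 : ∑ x ∈ S, S.card = _ := Finset.sum_congr rfl e4
  have s2 := Finset.sum_le_sum hout
  have s3 := Finset.sum_le_sum hin
  have s4 := Finset.sum_congr rfl e3
  simp only [Finset.sum_add_distrib, Finset.sum_const, smul_eq_mul, mul_one] at s1 s2 s3 s4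
  rcases Nat.eq_zero_or_pos S.card with h0 | h0
  · omega
  · refine Nat.le_of_mul_le_mul_left ?_ h0
    linarith

/-- The labels of color `c` in `S` lie in `[p c, p c + 2 ^ e c - 1)`. An odd number `2 ^ e c - 1`
of labels leaves `2 ^ (e c - 1) - 1` labels on either side of the middle one, which matches the
halving in the induction on `k = e true + e false`. -/
lemma card_lt_of_labels {col : ℕ → ℕ → Bool} {lam : ℕ → ℕ → ℕ} (h : IncreasingLabels col lam)
    (k : ℕ) : ∀ (e p : Bool → ℕ) (S : Finset ℕ), e true + e false = k → (∀ x ∈ S, 0 < x) →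
      (∀ x ∈ S, ∀ y ∈ S, x < y →
        p (col x y) ≤ lam x y ∧ lam x y + 1 < p (col x y) + 2 ^ e (col x y)) →
      S.card < 2 * 8 ^ k := by
  induction k with
  | zero =>
    intro e p S he hpos hS
    have := card_le_of_mono h true 0 0 S hpos (by
      intro x hx y hy hxy
      have := hS x hx y hy hxy
      have h0 : e (col x y) = 0 := by cases col x y <;> omega
      rw [h0] at this
      omega)
    omega
  | succ k ih =>
    intro e p S he hpos hS
    by_cases h0 : ∃ c, e c = 0
    · -- the color `c` is absent, so `S` is a clique in the other color
      obtain ⟨c, hc⟩ := h0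
      have hc' : e (!c) = k + 1 := by cases c <;> simp_all
      have h1 := card_le_of_mono h (!c) (2 ^ (k + 1) - 1) (p (!c)) S hpos (by
        intro x hx y hy hxy
        have h2 := hS x hx y hy hxy
        have h3 : col x y = !c := by
          by_contra hne
          have : col x y = c := by revert hne; cases col x y <;> cases c <;> simp
          rw [this, hc] at h2
          omega
        rw [h3, hc'] at h2
        exact ⟨h3, h2.1, by omega⟩)
      have h4 : 2 ^ (k + 1) ≤ 8 ^ (k + 1) := Nat.pow_le_pow_left (by norm_num) _
      have h5 : 0 < 2 ^ (k + 1) := by positivity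
      omega
    · push Not at h0
      -- the midpoint of the label interval of each color
      set t : Bool → ℕ := fun c => p c + 2 ^ (e c - 1) - 1 with ht
      have hpow : ∀ c, 2 ^ e c = 2 * 2 ^ (e c - 1) := fun c => by
        rw [← pow_succ', Nat.sub_add_cancel (Nat.one_le_iff_ne_zero.mpr (h0 c))]
      have hpp : ∀ c, 0 < 2 ^ (e c - 1) := fun c => by positivity
      have key : ∀ (c : Bool) (q : ℕ) (T : Finset ℕ), T ⊆ S →
          (∀ x ∈ T, ∀ y ∈ T, x < y → col x y = c →
            q ≤ lam x y ∧ lam x y + 1 < q + 2 ^ (e c - 1)) → T.card < 2 * 8 ^ k := by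
        intro c q T hT hq
        refine ih (Function.update e c (e c - 1)) (Function.update p c q) T ?_
          (fun x hx => hpos x (hT hx)) ?_
        · have h1 := h0 true
          have h2 := h0 false
          cases c <;> simp <;> omega
        · intro x hx y hy hxy
          by_cases hc : col x y = c
          · rw [hc]
            simpa using hq x hx y hy hxy hc
          · simpa [Function.update_of_ne hc] using hS x (hT hx) y (hT hy) hxy
      have hout : ∀ c, ∀ x ∈ S,
          (S.filter fun y => x < y ∧ col x y = c ∧ t c ≤ lam x y).card < 2 * 8 ^ k := by
        intro c x hx
        refine key c (t c + 1) _ (Finset.filter_subset _ _) ?_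
        intro y hy z hz hyz hcol
        simp only [Finset.mem_filter] at hy hz
        have h1 := h x y z (hpos x hx) hy.2.1 hyz (by rw [hy.2.2.1, hz.2.2.1])
          (by rw [hcol, hz.2.2.1])
        have h2 := hS y hy.1 z hz.1 hyz
        rw [hcol, hpow] at h2
        have := hpp c
        simp only [ht] at hy hz ⊢
        omega
      have hin : ∀ c, ∀ z ∈ S,
          (S.filter fun x => x < z ∧ col x z = c ∧ lam x z ≤ t c).card < 2 * 8 ^ k := by
        intro c z hz
        refine key c (p c) _ (Finset.filter_subset _ _) ?_
        intro x hx y hy hxy hcol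
        simp only [Finset.mem_filter] at hx hy
        have h1 := h x y z (hpos x hx.1) hxy hy.2.1 (by rw [hcol, hx.2.2.1])
          (by rw [hy.2.2.1, hx.2.2.1])
        have h2 := hS x hx.1 y hy.1 hxy
        rw [hcol] at h2
        have := hpp c
        simp only [ht] at hx hy ⊢
        omega
      have hdeg := card_le_of_degrees S (2 * (2 * 8 ^ k - 1)) (fun x y => t (col x y) ≤ lam x y)
        (by
          intro x hx
          have h1 := hout true x hx
          have h2 := hout false x hx
          have h3 : (S.filter fun y => x < y ∧ t (col x y) ≤ lam x y) ⊆
              (S.filter fun y => x < y ∧ col x y = true ∧ t true ≤ lam x y) ∪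
              (S.filter fun y => x < y ∧ col x y = false ∧ t false ≤ lam x y) := by
            intro y hy
            simp only [Finset.mem_union, Finset.mem_filter] at hy ⊢
            obtain ⟨hy1, hy2, hy3⟩ := hy
            cases hc : col x y
            · rw [hc] at hy3
              exact Or.inr ⟨hy1, hy2, rfl, hy3⟩
            · rw [hc] at hy3
              exact Or.inl ⟨hy1, hy2, rfl, hy3⟩
          have h4 := (Finset.card_le_card h3).trans (Finset.card_union_le _ _)
          omega)
        (by
          intro y hy
          have h1 := hin true y hy
          have h2 := hin false y hy
          have h3 : (S.filter fun x => x < y ∧ ¬ t (col x y) ≤ lam x y) ⊆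
              (S.filter fun x => x < y ∧ col x y = true ∧ lam x y ≤ t true) ∪
              (S.filter fun x => x < y ∧ col x y = false ∧ lam x y ≤ t false) := by
            intro x hx
            simp only [Finset.mem_union, Finset.mem_filter] at hx ⊢
            obtain ⟨hx1, hx2, hx3⟩ := hx
            cases hc : col x y
            · rw [hc] at hx3
              exact Or.inr ⟨hx1, hx2, rfl, by omega⟩
            · rw [hc] at hx3
              exact Or.inl ⟨hx1, hx2, rfl, by omega⟩
          have h4 := (Finset.card_le_card h3).trans (Finset.card_union_le _ _)
          omega)
      have : 0 < 8 ^ k := by positivity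
      rw [pow_succ]
      omega

/-! ### The label given by squares of paths ending at an edge -/

/-- `SqTail χ c n x y`: some square of a path on `n + 2` positive integers, of color `c`, has
`x < y` as its last two vertices. -/
inductive SqTail (χ : Finset ℕ → Bool) (c : Bool) : ℕ → ℕ → ℕ → Prop
  | base {x y : ℕ} : 0 < x → x < y → χ {x, y} = c → SqTail χ c 0 x y
  | step {n w x y : ℕ} : SqTail χ c n w x → x < y → χ {w, y} = c → χ {x, y} = c →
      SqTail χ c (n + 1) x y

lemma SqTail.exists_seq {χ : Finset ℕ → Bool} {c : Bool} {n x y : ℕ} (h : SqTail χ c n x y) :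
    ∃ f : ℕ → ℕ, StrictMono f ∧ 0 < f 0 ∧ f n = x ∧ f (n + 1) = y ∧
      ∀ i j, i < j → j < n + 2 → j - i ≤ 2 → χ {f i, f j} = c := by
  induction h with
  | @base x y hx hxy hc =>
    refine ⟨fun i => if i = 0 then x else y + (i - 1), ?_, by simpa, by simp, by simp, ?_⟩
    · refine strictMono_nat_of_lt_succ fun i => ?_
      by_cases hi : i = 0 <;> simp [hi] <;> omega
    · intro i j hij hj _
      obtain rfl : i = 0 := by omega
      obtain rfl : j = 1 := by omega
      simpa using hc
  | @step n w x y _ hxy hwy hc ih =>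
    obtain ⟨f, hf, hf0, hfn, hfn1, hfc⟩ := ih
    refine ⟨fun i => if i ≤ n + 1 then f i else y + (i - (n + 2)), ?_, by simpa, by simpa,
      by simp, ?_⟩
    · refine strictMono_nat_of_lt_succ fun i => ?_
      rcases lt_trichotomy i (n + 1) with hi | hi | hi
      · have := hf (Nat.lt_succ_self i)
        simpa [hi.le, Nat.succ_le_of_lt hi, show i ≤ n by omega] using this
      · subst hi
        simpa [hfn1] using hxy
      · have h1 : ¬ i ≤ n + 1 := by omega
        have h2 : ¬ i + 1 ≤ n + 1 := by omega
        simp only [h1, h2, if_false]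
        omega
    · intro i j hij hj hd
      have hi : i ≤ n + 1 := by omega
      by_cases hj' : j ≤ n + 1
      · simpa only [hi, hj', if_true] using hfc i j hij (by omega) hd
      · obtain rfl : j = n + 2 := by omega
        simp only [hi, hj', if_true, if_false, Nat.sub_self, add_zero]
        obtain rfl | rfl : i = n ∨ i = n + 1 := by omega
        · rwa [hfn]
        · rwa [hfn1]

lemma SqTail.hasPowPath {χ : Finset ℕ → Bool} {c : Bool} {n x y m N : ℕ}
    (h : SqTail χ c n x y) (hy : y ≤ N) (hm : m ≤ n + 2) : HasPowPath 2 m N c χ := by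
  obtain ⟨f, hf, hf0, -, hfn1, hfc⟩ := h.exists_seq
  refine ⟨f, hf, fun i hi => ?_, fun i j hij hj hd => hfc i j hij (by omega) hd⟩
  have h1 := hf.monotone (Nat.zero_le i)
  have h2 := hf.monotone (show i ≤ n + 1 by omega)
  rw [Finset.mem_Icc]
  omega

lemma SqTail.lt_right {χ : Finset ℕ → Bool} {c : Bool} {n x y : ℕ}
    (h : SqTail χ c n x y) : n < y := by
  induction h with
  | base => omega
  | step _ _ _ _ ih => omega

open Classical in
/-- The largest `n` with `SqTail χ (χ {x, y}) n x y`. Every such `n` is below `y`, so the search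
bound in `Nat.findGreatest` is no restriction. -/
noncomputable def sqLabel (χ : Finset ℕ → Bool) (x y : ℕ) : ℕ :=
  Nat.findGreatest (fun n => SqTail χ (χ {x, y}) n x y) y

lemma sqTail_sqLabel (χ : Finset ℕ → Bool) {x y : ℕ} (hx : 0 < x) (hxy : x < y) :
    SqTail χ (χ {x, y}) (sqLabel χ x y) x y := by
  classical
  exact Nat.findGreatest_spec (P := fun n => SqTail χ (χ {x, y}) n x y) (Nat.zero_le y)
    (SqTail.base hx hxy rfl)

lemma increasingLabels_sqLabel (χ : Finset ℕ → Bool) :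
    IncreasingLabels (fun x y => χ {x, y}) (sqLabel χ) := by
  classical
  intro x y z hx hxy hyz h1 h2
  have h3 := sqTail_sqLabel χ hx hxy
  simp only at h1 h2
  rw [h1] at h3
  have h4 := SqTail.step h3 hyz rfl h2
  have h5 := h4.lt_right
  refine Nat.lt_of_succ_le (Nat.le_findGreatest h5.le ?_)
  rw [h2]
  exact h4

/-! ### The Ramsey bound -/

lemma powPathRamsey_two_le {a b : ℕ} (ha : 2 ≤ a) (hb : 2 ≤ b) :
    powPathRamsey 2 a b ≤ 128 * (a * b) ^ 3 := by
  set i := Nat.clog 2 a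
  set j := Nat.clog 2 b
  have hclog : ∀ n : ℕ, 2 ≤ n → 2 ^ Nat.clog 2 n ≤ 2 * n := by
    intro n hn
    have h1 := Nat.pow_pred_clog_lt_self (b := 2) (by norm_num) (show 1 < n by omega)
    have h2 : 0 < Nat.clog 2 n := Nat.clog_pos (by norm_num) hn
    have h3 : 2 ^ Nat.clog 2 n = 2 * 2 ^ (Nat.clog 2 n).pred := by
      rw [← pow_succ', Nat.pred_eq_sub_one, Nat.sub_add_cancel h2]
    omega
  have hi : a ≤ 2 ^ i := Nat.le_pow_clog (by norm_num) a
  have hj : b ≤ 2 ^ j := Nat.le_pow_clog (by norm_num) b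
  have hmem : powPathRamsey 2 a b ≤ 2 * 8 ^ (i + j) := by
    refine Nat.sInf_le fun χ => ?_
    by_contra hno
    push Not at hno
    have := card_lt_of_labels (increasingLabels_sqLabel χ) (i + j) (fun c => cond c i j)
      (fun _ => 0) (Finset.Icc 1 (2 * 8 ^ (i + j))) rfl
      (fun x hx => (Finset.mem_Icc.mp hx).1) (by
        intro x hx y hy hxy
        have h1 := sqTail_sqLabel χ (Finset.mem_Icc.mp hx).1 hxy
        have hy' := (Finset.mem_Icc.mp hy).2
        refine ⟨Nat.zero_le _, ?_⟩
        cases hc : χ {x, y} <;> rw [hc] at h1 <;> simp only [cond_true, cond_false]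
        · have : ¬ b ≤ sqLabel χ x y + 2 := fun hle => hno.2 (h1.hasPowPath hy' hle)
          omega
        · have : ¬ a ≤ sqLabel χ x y + 2 := fun hle => hno.1 (h1.hasPowPath hy' hle)
          omega)
    simp at this
  calc powPathRamsey 2 a b ≤ 2 * 8 ^ (i + j) := hmem
    _ = 2 * (2 ^ i * 2 ^ j) ^ 3 := by
      rw [← pow_add, ← pow_mul, mul_comm (i + j) 3, pow_mul]
      norm_num
    _ ≤ 2 * ((2 * a) * (2 * b)) ^ 3 := by
      gcongr
      · exact hclog a ha
      · exact hclog b hb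
    _ = 128 * (a * b) ^ 3 := by ring

/-- There is a constant `c > 0` such that for all integers `a, b ≥ 2`,
`r(P_a^2, P_b^2) ≤ c · (a·b)^{9.7435}`. -/
theorem stmt_1 :
    ∃ c : ℝ, 0 < c ∧ ∀ a b : ℕ, 2 ≤ a → 2 ≤ b →
      (powPathRamsey 2 a b : ℝ) ≤ c * ((a * b : ℕ) : ℝ) ^ (9.7435 : ℝ) := by
  refine ⟨128, by norm_num, fun a b ha hb => ?_⟩
  have h1 : (powPathRamsey 2 a b : ℝ) ≤ 128 * ((a * b : ℕ) : ℝ) ^ 3 := by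
    exact_mod_cast powPathRamsey_two_le ha hb
  have h2 : (1 : ℝ) ≤ ((a * b : ℕ) : ℝ) := by
    exact_mod_cast Nat.mul_pos (by omega) (by omega)
  have h3 : ((a * b : ℕ) : ℝ) ^ 3 ≤ ((a * b : ℕ) : ℝ) ^ (9.7435 : ℝ) := by
    rw [← Real.rpow_natCast]
    exact Real.rpow_le_rpow_of_exponent_le h2 (by norm_num)
  linarith
end

section
/- For all sufficiently large n, r_3(4, P_n) < n^{21}: every red/blue coloring of the 3-element subsets of {1,...,⌈n^{21}⌉} contains a red copy of the complete 3-uniform hypergraph on 4 vertices or a blue ordered copy of the 3-uniform tight path on n vertices. -/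
/-! ### Squares of monotone paths in two-coloured ordered graphs -/

/-- `x 0, …, x (m-1)` is a copy of the square of the monotone path on `m` vertices in colour `c`,
with vertices in `T`.  The values `x i` with `i ≥ m` are irrelevant apart from lying in `T`, so
that `T` is nonempty even if `m = 0`. -/
def SqPath (χ : ℕ → ℕ → Bool) (c : Bool) (T : Finset ℕ) (m : ℕ) (x : ℕ → ℕ) : Prop :=
  (∀ i, x i ∈ T) ∧ ∀ i j, i < j → j ≤ i + 2 → j < m → x i < x j ∧ χ (x i) (x j) = c

/-- `T` contains a colour-`c` square of a monotone path on `m` vertices. -/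
def HasSq (χ : ℕ → ℕ → Bool) (c : Bool) (T : Finset ℕ) (m : ℕ) : Prop :=
  ∃ x, SqPath χ c T m x

lemma HasSq.mono {χ : ℕ → ℕ → Bool} {c : Bool} {T T' : Finset ℕ} {m m' : ℕ}
    (h : HasSq χ c T m) (hT : T ⊆ T') (hm : m' ≤ m) : HasSq χ c T' m' := by
  obtain ⟨x, hx, hp⟩ := h
  exact ⟨x, fun i => hT (hx i), fun i j h1 h2 h3 => hp i j h1 h2 (by omega)⟩

/-- Two squares of paths can be concatenated as soon as the last two vertices of the first are
joined correctly to the first two vertices of the second. -/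
lemma SqPath.append {χ : ℕ → ℕ → Bool} {c : Bool} {T : Finset ℕ} {m m' : ℕ} {x y : ℕ → ℕ}
    (hx : SqPath χ c T m x) (hy : SqPath χ c T m' y)
    (hxy : ∀ i j, i < m → j < m' → m + j ≤ i + 2 → x i < y j ∧ χ (x i) (y j) = c) :
    SqPath χ c T (m + m') (fun i => if i < m then x i else y (i - m)) := by
  refine ⟨fun i => ?_, fun i j h1 h2 h3 => ?_⟩
  · by_cases h : i < m
    · simpa [h] using hx.1 i
    · simpa [h] using hy.1 _
  · by_cases hj : j < m
    · have hi : i < m := by omega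
      simpa [hi, hj] using hx.2 i j h1 h2 hj
    · by_cases hi : i < m
      · simpa [hi, hj] using hxy i (j - m) hi (by omega) (by omega)
      · simpa [hi, hj] using hy.2 (i - m) (j - m) (by omega) (by omega) (by omega)

/-- If `w` and `z` each have at most `(|A| - r) / 2` neighbours of colour `!c` in `A`, then they
have at least `r` common neighbours of colour `c` in `A`. -/
lemma common_nbrs (ψ : ℕ → ℕ → Bool) (c : Bool) (A : Finset ℕ) (r w z : ℕ)
    (hw : 2 * (A.filter fun a => ψ a w = !c).card + r ≤ A.card)
    (hz : 2 * (A.filter fun a => ψ a z = !c).card + r ≤ A.card) :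
    r ≤ (A.filter fun a => ψ a w = c ∧ ψ a z = c).card := by
  have hsub : A ⊆ (A.filter fun a => ψ a w = c ∧ ψ a z = c) ∪
      ((A.filter fun a => ψ a w = !c) ∪ (A.filter fun a => ψ a z = !c)) := by
    intro a ha
    simp only [Finset.mem_union, Finset.mem_filter, ha, true_and]
    cases ψ a w <;> cases ψ a z <;> cases c <;> simp
  have h1 := Finset.card_le_card hsub
  have h2 := Finset.card_union_le (A.filter fun a => ψ a w = c ∧ ψ a z = c)
    ((A.filter fun a => ψ a w = !c) ∪ (A.filter fun a => ψ a z = !c))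
  have h3 := Finset.card_union_le (A.filter fun a => ψ a w = !c) (A.filter fun a => ψ a z = !c)
  omega

/-- The `k` smallest elements of a finite set. -/
lemma exists_initial (S : Finset ℕ) (k : ℕ) (hk : k ≤ S.card) :
    ∃ A ⊆ S, A.card = k ∧ ∀ a ∈ A, ∀ x ∈ S \ A, a < x := by
  induction k with
  | zero => exact ⟨∅, by simp, by simp, by simp⟩
  | succ k ih =>
    obtain ⟨A, hA, hc, hlt⟩ := ih (by omega)
    have hne : (S \ A).Nonempty := by
      rw [← Finset.card_pos, Finset.card_sdiff_of_subset hA]; omega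
    have hmem := Finset.min'_mem _ hne
    refine ⟨insert ((S \ A).min' hne) A, ?_, ?_, ?_⟩
    · intro y hy
      rcases Finset.mem_insert.1 hy with rfl | hy
      · exact (Finset.mem_sdiff.1 hmem).1
      · exact hA hy
    · rw [Finset.card_insert_of_notMem (Finset.mem_sdiff.1 hmem).2, hc]
    · intro a ha x hx
      simp only [Finset.mem_sdiff, Finset.mem_insert, not_or] at hx
      have hx' : x ∈ S \ A := Finset.mem_sdiff.2 ⟨hx.1, hx.2.2⟩
      rcases Finset.mem_insert.1 ha with rfl | ha
      · exact lt_of_le_of_ne (Finset.min'_le _ _ hx') (Ne.symm hx.2.1)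
      · exact hlt a ha x hx'

section Step

variable {χ : ℕ → ℕ → Bool} {S : Finset ℕ} {r : ℕ} {m : Bool → ℕ}

/-- If no colour `c` has a square of a path on `2 * m c` vertices, then in a set `P` to the right
of `A` fewer than `r` vertices see few vertices of `A` in colour `c`: otherwise a half-length
path of colour `!c` among them could be preceded by one in `A`. -/
lemma few_bad_left (H : ∀ c, ∀ T ⊆ S, r ≤ T.card → HasSq χ c T (m c))
    (hno : ∀ c, ¬ HasSq χ c S (2 * m c)) {A P : Finset ℕ} (hA : A ⊆ S) (hP : P ⊆ S)
    (hlt : ∀ a ∈ A, ∀ p ∈ P, a < p) (c : Bool) :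
    (P.filter fun y => 2 * (A.filter fun a => χ a y = c).card + r ≤ A.card).card < r := by
  by_contra hcon
  push Not at hcon
  obtain ⟨y, hy, hyp⟩ := H (!c) _ ((Finset.filter_subset _ _).trans hP) hcon
  have hy' : ∀ i, y i ∈ P ∧ 2 * (A.filter fun a => χ a (y i) = c).card + r ≤ A.card :=
    fun i => Finset.mem_filter.1 (hy i)
  have hcn := common_nbrs χ (!c) A r (y 0) (y 1)
    (by simpa using (hy' 0).2) (by simpa using (hy' 1).2)
  obtain ⟨x, hx, hxp⟩ := H (!c) _ ((Finset.filter_subset _ _).trans hA) hcn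
  have hx' := fun i => Finset.mem_filter.1 (hx i)
  refine hno (!c) ⟨_, two_mul (m (!c)) ▸ SqPath.append (x := x) (y := y)
    ⟨fun i => hA (hx' i).1, hxp⟩ ⟨fun i => hP (hy' i).1, hyp⟩ ?_⟩
  intro i j hi hj hij
  refine ⟨hlt _ (hx' i).1 _ (hy' j).1, ?_⟩
  have : j = 0 ∨ j = 1 := by omega
  rcases this with rfl | rfl
  · exact (hx' i).2.1
  · exact (hx' i).2.2

/-- The mirror image of `few_bad_left`, for a set `B` to the right of `P`. -/
lemma few_bad_right (H : ∀ c, ∀ T ⊆ S, r ≤ T.card → HasSq χ c T (m c))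
    (hno : ∀ c, ¬ HasSq χ c S (2 * m c)) {B P : Finset ℕ} (hB : B ⊆ S) (hP : P ⊆ S)
    (hlt : ∀ p ∈ P, ∀ b ∈ B, p < b) (c : Bool) :
    (P.filter fun y => 2 * (B.filter fun b => χ y b = c).card + r ≤ B.card).card < r := by
  by_contra hcon
  push Not at hcon
  obtain ⟨y, hy, hyp⟩ := H (!c) _ ((Finset.filter_subset _ _).trans hP) hcon
  have hy' : ∀ i, y i ∈ P ∧ 2 * (B.filter fun b => χ (y i) b = c).card + r ≤ B.card :=
    fun i => Finset.mem_filter.1 (hy i)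
  have hcn := common_nbrs (fun b a => χ a b) (!c) B r (y (m (!c) - 1)) (y (m (!c) - 2))
    (by simpa using (hy' _).2) (by simpa using (hy' _).2)
  obtain ⟨x, hx, hxp⟩ := H (!c) _ ((Finset.filter_subset _ _).trans hB) hcn
  have hx' := fun i => Finset.mem_filter.1 (hx i)
  refine hno (!c) ⟨_, two_mul (m (!c)) ▸ SqPath.append (x := y) (y := x)
    ⟨fun i => hP (hy' i).1, hyp⟩ ⟨fun i => hB (hx' i).1, hxp⟩ ?_⟩
  intro i j hi hj hij
  refine ⟨hlt _ (hy' i).1 _ (hx' j).1, ?_⟩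
  have : i = m (!c) - 1 ∨ i = m (!c) - 2 := by omega
  rcases this with rfl | rfl
  · exact (hx' j).2.1
  · exact (hx' j).2.2

/-- Half-length paths in the common `c`-neighbourhoods of `z₁ < z₂` to the left and to the right
are linked by `z₁, z₂` when this pair has colour `c`. -/
lemma connect (H : ∀ c, ∀ T ⊆ S, r ≤ T.card → HasSq χ c T (m c))
    {A B : Finset ℕ} (hA : A ⊆ S) (hB : B ⊆ S) {z₁ z₂ : ℕ} (h₁ : z₁ ∈ S) (h₂ : z₂ ∈ S)
    (hz : z₁ < z₂) (hAz : ∀ a ∈ A, a < z₁) (hBz : ∀ b ∈ B, z₂ < b)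
    (hca : r ≤ (A.filter fun a => χ a z₁ = χ z₁ z₂ ∧ χ a z₂ = χ z₁ z₂).card)
    (hcb : r ≤ (B.filter fun b => χ z₁ b = χ z₁ z₂ ∧ χ z₂ b = χ z₁ z₂).card) :
    HasSq χ (χ z₁ z₂) S (2 * m (χ z₁ z₂)) := by
  obtain ⟨x, hx, hxp⟩ := H (χ z₁ z₂) _ ((Finset.filter_subset _ _).trans hA) hca
  obtain ⟨y, hy, hyp⟩ := H (χ z₁ z₂) _ ((Finset.filter_subset _ _).trans hB) hcb
  have hx' := fun i => Finset.mem_filter.1 (hx i)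
  have hy' := fun i => Finset.mem_filter.1 (hy i)
  have hmid : SqPath χ (χ z₁ z₂) S 2 (fun i => if i = 0 then z₁ else z₂) := by
    refine ⟨fun i => ?_, fun i j hi hj hm => ?_⟩
    · dsimp only
      split_ifs <;> assumption
    · obtain ⟨rfl, rfl⟩ : i = 0 ∧ j = 1 := by omega
      simpa using hz
  have h3 := SqPath.append hmid (⟨fun i => hB (hy' i).1, hyp⟩ : SqPath χ (χ z₁ z₂) S _ y) (by
    intro i j hi hj hij
    have : i = 0 ∨ i = 1 := by omega
    have hb := hBz _ (hy' j).1
    rcases this with rfl | rfl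
    · exact ⟨by simpa using hz.trans hb, by simpa using (hy' j).2.1⟩
    · exact ⟨by simpa using hb, by simpa using (hy' j).2.2⟩)
  have h4 := SqPath.append (⟨fun i => hA (hx' i).1, hxp⟩ : SqPath χ (χ z₁ z₂) S _ x) h3 (by
    intro i j hi hj hij
    have ha := hAz _ (hx' i).1
    have : j = 0 ∨ j = 1 := by omega
    rcases this with rfl | rfl
    · exact ⟨by simpa using ha, by simpa using (hx' i).2.1⟩
    · exact ⟨by simpa using ha.trans hz, by simpa using (hx' i).2.2⟩)
  exact HasSq.mono ⟨_, h4⟩ subset_rfl (by omega)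

/-- The doubling step: if every `r`-subset of `S` contains, in each colour `c`, the square of a
path on `m c` vertices and `|S| ≥ 18 r`, then some `c` has one on `2 * m c` vertices. -/
lemma doubling (H : ∀ c, ∀ T ⊆ S, r ≤ T.card → HasSq χ c T (m c))
    (hS : 18 * r ≤ S.card) : ∃ c, HasSq χ c S (2 * m c) := by
  by_contra hno
  push Not at hno
  -- `A < M < B` with sizes `7r`, `4r`, `7r`
  obtain ⟨A, hA, hAc, hAlt⟩ := exists_initial S (7 * r) (by omega)
  have hSA : (S \ A).card = S.card - A.card := Finset.card_sdiff_of_subset hA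
  obtain ⟨M, hM', hMc, hMlt⟩ := exists_initial (S \ A) (4 * r) (by omega)
  have hM : M ⊆ S := hM'.trans Finset.sdiff_subset
  obtain ⟨B, hB', hBe⟩ : ∃ B ⊆ (S \ A) \ M, B.card = 7 * r :=
    Finset.exists_subset_card_eq (by
      rw [Finset.card_sdiff_of_subset hM']; omega)
  have hB : B ⊆ S := hB'.trans (Finset.sdiff_subset.trans Finset.sdiff_subset)
  have hAM : ∀ a ∈ A, ∀ p ∈ M, a < p := fun a ha p hp => hAlt a ha p (hM' hp)
  have hMB : ∀ p ∈ M, ∀ b ∈ B, p < b := fun p hp b hb => hMlt p hp b (hB' hb)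
  -- choosing a vertex of `M` outside the four sets of bad vertices and distinct from a given one
  have pick : ∀ (A' B' : Bool → Finset ℕ), (∀ c, A' c ⊆ A) → (∀ c, B' c ⊆ B) → ∀ z : ℕ,
      ∃ y ∈ M, y ≠ z ∧ ∀ c,
        (A' c).card < 2 * ((A' c).filter fun a => χ a y = c).card + r ∧
        (B' c).card < 2 * ((B' c).filter fun b => χ y b = c).card + r := by
    intro A' B' hA' hB' z
    have bl := fun c => few_bad_left H hno ((hA' c).trans hA) hM
      (fun a ha p hp => hAM a (hA' c ha) p hp) c
    have br := fun c => few_bad_right H hno ((hB' c).trans hB) hM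
      (fun p hp b hb => hMB p hp b (hB' c hb)) c
    set L := fun c => M.filter fun y =>
      2 * ((A' c).filter fun a => χ a y = c).card + r ≤ (A' c).card with hL
    set R := fun c => M.filter fun y =>
      2 * ((B' c).filter fun b => χ y b = c).card + r ≤ (B' c).card with hR
    have hlt : (insert z ((L true ∪ L false) ∪ (R true ∪ R false))).card < M.card := by
      have h1 := Finset.card_insert_le z ((L true ∪ L false) ∪ (R true ∪ R false))
      have h2 := Finset.card_union_le (L true ∪ L false) (R true ∪ R false)
      have h3 := Finset.card_union_le (L true) (L false)
      have h4 := Finset.card_union_le (R true) (R false)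
      have b1 : (L true).card < r := bl true
      have b2 : (L false).card < r := bl false
      have b3 : (R true).card < r := br true
      have b4 : (R false).card < r := br false
      omega
    obtain ⟨y, hyM, hy⟩ := Finset.exists_mem_notMem_of_card_lt_card hlt
    simp only [Finset.mem_insert, Finset.mem_union, not_or] at hy
    refine ⟨y, hyM, hy.1, fun c => ⟨?_, ?_⟩⟩
    · by_contra h
      have : y ∈ L c := Finset.mem_filter.2 ⟨hyM, by omega⟩
      cases c
      · exact hy.2.1.2 this
      · exact hy.2.1.1 this
    · by_contra h
      have : y ∈ R c := Finset.mem_filter.2 ⟨hyM, by omega⟩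
      cases c
      · exact hy.2.2.2 this
      · exact hy.2.2.1 this
  obtain ⟨y, hyM, -, hy⟩ := pick (fun _ => A) (fun _ => B) (fun _ => subset_rfl)
    (fun _ => subset_rfl) 0
  obtain ⟨z, hzM, hzy, hz⟩ := pick (fun c => A.filter fun a => χ a y = c)
    (fun c => B.filter fun b => χ y b = c) (fun _ => Finset.filter_subset _ _)
    (fun _ => Finset.filter_subset _ _) y
  simp only [Finset.filter_filter] at hz
  rcases lt_or_gt_of_ne hzy with hlt | hlt
  · refine hno _ (connect H hA hB (hM hzM) (hM hyM) hlt (fun a ha => hAM a ha z hzM)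
      (fun b hb => hMB y hyM b hb) ?_ ?_)
    · have h1 := hy (χ z y); have h2 := hz (χ z y)
      simp only [and_comm] at h2 ⊢; omega
    · have h1 := hy (χ z y); have h2 := hz (χ z y)
      simp only [and_comm] at h2 ⊢; omega
  · refine hno _ (connect H hA hB (hM hyM) (hM hzM) hlt (fun a ha => hAM a ha y hyM)
      (fun b hb => hMB z hzM b hb) ?_ ?_)
    · have h1 := hy (χ y z); have h2 := hz (χ y z); omega
    · have h1 := hy (χ y z); have h2 := hz (χ y z); omega

end Step

/-- A polynomial bound for the ordered Ramsey number of squares of monotone paths. -/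
lemma sq_ramsey (χ : ℕ → ℕ → Bool) (s : ℕ) : ∀ (e : Bool → ℕ) (S : Finset ℕ),
    e true + e false = s → 18 ^ s ≤ S.card → ∃ c, HasSq χ c S (2 ^ e c) := by
  induction s with
  | zero =>
    intro e S he hS
    obtain ⟨v, hv⟩ := Finset.card_pos.1 (lt_of_lt_of_le (by norm_num) hS)
    refine ⟨true, fun _ => v, fun _ => hv, fun i j h1 _ h3 => ?_⟩
    have : e true = 0 := by omega
    rw [this] at h3; omega
  | succ s ih =>
    intro e S he hS
    by_contra hno
    push Not at hno
    have hpos : ∀ c, 0 < e c := by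
      intro c
      by_contra h0
      obtain ⟨v, hv⟩ := Finset.card_pos.1 (lt_of_lt_of_le (by positivity) hS)
      refine hno c ⟨fun _ => v, fun _ => hv, fun i j h1 _ h3 => ?_⟩
      have : e c = 0 := by omega
      rw [this] at h3; omega
    obtain ⟨c, hc⟩ := doubling (χ := χ) (S := S) (r := 18 ^ s) (m := fun c => 2 ^ (e c - 1))
      (fun c T hT hTc => by
        obtain ⟨c', hc'⟩ := ih (Function.update e c (e c - 1)) T (by
          have h1 := hpos true; have h2 := hpos false
          cases c <;> simp <;> omega) hTc
        by_cases hcc : c' = c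
        · subst hcc; simpa using hc'
        · rw [Function.update_of_ne hcc] at hc'
          exact absurd (hc'.mono hT le_rfl) (hno c')) (by rw [pow_succ] at hS; omega)
    refine hno c ?_
    have : 2 * 2 ^ (e c - 1) = 2 ^ e c := by
      rw [← pow_succ']; congr 1; have := hpos c; omega
    rwa [this] at hc

/-! ### Labellings of pairs -/

/-- Four vertices all of whose triples `u < v < w` satisfy `f v w ≤ f u v`. -/
def HasDecreasingQuad (f : ℕ → ℕ → ℕ) (N : ℕ) : Prop :=
  ∃ a b c d, 1 ≤ a ∧ a < b ∧ b < c ∧ c < d ∧ d ≤ N ∧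
    f b c ≤ f a b ∧ f b d ≤ f a b ∧ f c d ≤ f a c ∧ f c d ≤ f b c

section Labelling

variable {f : ℕ → ℕ → ℕ} {n N k : ℕ}

/-- A sequence along which the labels of consecutive pairs increase is short. -/
lemma no_long_increasing (hf : ∀ a b, 1 ≤ a → a < b → b ≤ N → f a b < n) {x : ℕ → ℕ} {l : ℕ}
    (hl : n + 2 ≤ l) (hx : ∀ i, 1 ≤ x i ∧ x i ≤ N) (hlt : ∀ i, i + 1 < l → x i < x (i + 1))
    (hinc : ∀ i, i + 2 < l → f (x i) (x (i + 1)) < f (x (i + 1)) (x (i + 2))) : False := by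
  have key : ∀ i, i + 1 < l → i ≤ f (x i) (x (i + 1)) := by
    intro i
    induction i with
    | zero => intro _; omega
    | succ i ih =>
      intro hi
      have h1 := ih (by omega)
      have h2 := hinc i (by omega)
      have h3 : i + 1 + 1 = i + 2 := rfl
      rw [h3]; omega
  have h1 := key n (by omega)
  have h2 := hf (x n) (x (n + 1)) (hx n).1 (hlt n (by omega)) (hx _).2
  omega

/-- A set `S` between `a` and `d` with `f b d ≤ t ≤ f a b` for all `b ∈ S` is small: the pairs in
`S` with label at most `t` span no long square of a path because of `a`, and those with label
above `t` span none because of `d`. -/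
lemma between_small (hf : ∀ a b, 1 ≤ a → a < b → b ≤ N → f a b < n)
    (hq : ¬ HasDecreasingQuad f N) (hk : n + 2 ≤ 2 ^ k) {a d t : ℕ} {S : Finset ℕ}
    (ha : 1 ≤ a) (hd : d ≤ N)
    (hS : ∀ b ∈ S, a < b ∧ b < d ∧ t ≤ f a b ∧ f b d ≤ t) : S.card ≤ 18 ^ (k + k) := by
  by_contra hcon
  push Not at hcon
  obtain ⟨c, x, hx, hp⟩ := sq_ramsey (fun b c => decide (f b c ≤ t)) (k + k) (fun _ => k) S rfl
    hcon.le
  have hxS := fun i => hS _ (hx i)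
  refine no_long_increasing hf hk (x := x) (fun i => ?_) (fun i hi => ?_) (fun i hi => ?_)
  · have := hxS i; omega
  · exact (hp i (i + 1) (by omega) (by omega) hi).1
  · have p1 := hp i (i + 1) (by omega) (by omega) (by omega)
    have p2 := hp i (i + 2) (by omega) (by omega) (by omega)
    have p3 := hp (i + 1) (i + 2) (by omega) (by omega) (by omega)
    have q0 := hxS i
    have q1 := hxS (i + 1)
    have q2 := hxS (i + 2)
    by_contra hnot
    apply hq
    cases c
    · simp only [decide_eq_false_iff_not] at p1 p2 p3
      exact ⟨x i, x (i + 1), x (i + 2), d, by omega, p1.1, p3.1, q2.2.1, hd,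
        by omega, by omega, by omega, by omega⟩
    · simp only [decide_eq_true_eq] at p1 p2 p3
      exact ⟨a, x i, x (i + 1), x (i + 2), ha, q0.1, p1.1, p3.1, by omega,
        by omega, by omega, by omega, by omega⟩

/-- For fixed `a < d` only few `b` in between satisfy `f b d ≤ f a b`. -/
lemma few_decreasing (hf : ∀ a b, 1 ≤ a → a < b → b ≤ N → f a b < n)
    (hq : ¬ HasDecreasingQuad f N) (hk : n + 2 ≤ 2 ^ k) {a d : ℕ} {Y : Finset ℕ}
    (ha : 1 ≤ a) (hd : d ≤ N) (hY : ∀ b ∈ Y, a < b ∧ b < d) :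
    (Y.filter fun b => f b d ≤ f a b).card ≤ n * 18 ^ (k + k) := by
  have := Finset.card_le_mul_card_image_of_maps_to (s := Y.filter fun b => f b d ≤ f a b)
    (t := Finset.range n) (f := fun b => f a b) (fun b hb => by
      have hb' := (Finset.mem_filter.1 hb)
      have := hY b hb'.1
      exact Finset.mem_range.2 (hf a b ha this.1 (by omega))) (18 ^ (k + k)) (fun t _ => by
      refine between_small hf hq hk (a := a) (d := d) (t := t) ha hd (fun b hb => ?_)
      simp only [Finset.mem_filter] at hb
      have := hY b hb.1.1
      omega)
  rw [Finset.card_range] at this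
  rwa [mul_comm]

/-- A labelling of the pairs of `{1, …, N}` by fewer than `n` labels has a decreasing quadruple
once `N` is large. -/
lemma exists_quad (hf : ∀ a b, 1 ≤ a → a < b → b ≤ N → f a b < n) (hk : n + 2 ≤ 2 ^ k)
    (hN : (n + 2) * (4 * (n * 18 ^ (k + k))) ≤ N) (hn : 0 < n) : HasDecreasingQuad f N := by
  by_contra hq
  obtain ⟨D, hD⟩ : ∃ D, D = n * 18 ^ (k + k) := ⟨_, rfl⟩
  rw [← hD] at hN
  have hDpos : 0 < D := by rw [hD]; positivity
  have bad : ∀ {a d : ℕ} {Y : Finset ℕ}, 1 ≤ a → d ≤ N → (∀ b ∈ Y, a < b ∧ b < d) →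
      (Y.filter fun b => f b d ≤ f a b).card ≤ D := fun ha hd hY =>
    hD ▸ few_decreasing hf hq hk ha hd hY
  -- consecutive blocks of `4 * D` vertices
  obtain ⟨V, hV⟩ : ∃ V : ℕ → Finset ℕ, V = fun i => Finset.Ioc (i * (4 * D)) ((i + 1) * (4 * D)) :=
    ⟨_, rfl⟩
  have hVc : ∀ i, (V i).card = 4 * D := by
    intro i; rw [hV]; simp only [Nat.card_Ioc, add_mul, one_mul]; omega
  have hVlt : ∀ i, ∀ v ∈ V i, ∀ w ∈ V (i + 1), v < w := by
    intro i v hv w hw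
    rw [hV] at hv hw
    have h1 := (Finset.mem_Ioc.1 hv).2
    have h2 := (Finset.mem_Ioc.1 hw).1
    omega
  have hVN : ∀ i, i < n + 2 → ∀ v ∈ V i, 1 ≤ v ∧ v ≤ N := by
    intro i hi v hv
    rw [hV] at hv
    have h1 := Finset.mem_Ioc.1 hv
    have h2 : (i + 1) * (4 * D) ≤ (n + 2) * (4 * D) := Nat.mul_le_mul_right _ (by omega)
    omega
  have key : ∀ i, i ≤ n → ∃ a ∈ V i, ∃ Y ⊆ V (i + 1), 2 * D ≤ Y.card ∧ ∀ b ∈ Y, i ≤ f a b := by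
    intro i
    induction i with
    | zero =>
      intro _
      obtain ⟨a, ha⟩ : (V 0).Nonempty := Finset.card_pos.1 (by rw [hVc]; omega)
      exact ⟨a, ha, V 1, subset_rfl, by rw [hVc]; omega, fun _ _ => Nat.zero_le _⟩
    | succ i ih =>
      intro hi
      obtain ⟨a, ha, Y, hY, hYc, hfa⟩ := ih (by omega)
      -- every `d` in the next block has a label above `i` with at least half of `Y`
      have hdeg : ∀ d ∈ V (i + 2), Y.card ≤ 2 * (Y.filter fun b => i + 1 ≤ f b d).card := by
        intro d hd
        have h1 := bad (a := a) (d := d) (Y := Y) (hVN i (by omega) a ha).1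
          (hVN (i + 2) (by omega) d hd).2
          (fun b hb => ⟨hVlt i a ha b (hY hb), hVlt (i + 1) b (hY hb) d hd⟩)
        have h2 := Finset.card_filter_add_card_filter_not (s := Y) (fun b => f b d ≤ f a b)
        have h3 : (Y.filter fun b => ¬ f b d ≤ f a b).card ≤
            (Y.filter fun b => i + 1 ≤ f b d).card := by
          apply Finset.card_le_card
          intro b hb
          simp only [Finset.mem_filter] at hb ⊢
          have := hfa b hb.1
          exact ⟨hb.1, by omega⟩
        omega
      by_contra hnone
      push Not at hnone
      have hsmall : ∀ b ∈ Y, ((V (i + 2)).filter fun d => i + 1 ≤ f b d).card < 2 * D := by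
        intro b hb
        by_contra h
        obtain ⟨d, hd, hlt⟩ := hnone b (hY hb) ((V (i + 2)).filter fun d => i + 1 ≤ f b d)
          (Finset.filter_subset _ _) (by omega)
        have := (Finset.mem_filter.1 hd).2
        omega
      have hdc := Finset.sum_card_bipartiteAbove_eq_sum_card_bipartiteBelow
        (s := Y) (t := V (i + 2)) (fun b d => i + 1 ≤ f b d)
      simp only [Finset.bipartiteAbove, Finset.bipartiteBelow] at hdc
      have hlow : ∑ d ∈ V (i + 2), Y.card ≤
          ∑ d ∈ V (i + 2), 2 * (Y.filter fun b => i + 1 ≤ f b d).card :=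
        Finset.sum_le_sum hdeg
      have hup : ∑ b ∈ Y, ((V (i + 2)).filter fun d => i + 1 ≤ f b d).card <
          ∑ b ∈ Y, 2 * D := by
        refine Finset.sum_lt_sum_of_nonempty (Finset.card_pos.1 (by omega)) hsmall
      rw [← Finset.mul_sum, ← hdc, Finset.sum_const, hVc, smul_eq_mul] at hlow
      rw [Finset.sum_const, smul_eq_mul] at hup
      have e1 : 4 * D * Y.card = 2 * (Y.card * (2 * D)) := by ring
      omega
  obtain ⟨a, ha, Y, hY, hYc, hfa⟩ := key n le_rfl
  obtain ⟨b, hb⟩ : Y.Nonempty := Finset.card_pos.1 (by omega)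
  have h1 := hfa b hb
  have h2 := hf a b (hVN n (by omega) a ha).1 (hVlt n a ha b (hY hb))
    (hVN (n + 1) (by omega) b (hY hb)).2
  omega

end Labelling

/-! ### From triples to labelled pairs -/

/-- Some blue tight path on `m + 2` vertices in `{1, …, N}` ends with the pair `a, b`. -/
def EndsAt (χ : Finset ℕ → Bool) (N m a b : ℕ) : Prop :=
  ∃ x : ℕ → ℕ, StrictMono x ∧ (∀ i ≤ m + 1, 1 ≤ x i ∧ x i ≤ N) ∧ x m = a ∧ x (m + 1) = b ∧
    ∀ j, j + 1 ≤ m → χ {x j, x (j + 1), x (j + 2)} = false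

lemma endsAt_zero (χ : Finset ℕ → Bool) {N a b : ℕ} (ha : 1 ≤ a) (hab : a < b) (hb : b ≤ N) :
    EndsAt χ N 0 a b := by
  refine ⟨fun i => if i = 0 then a else b + (i - 1), strictMono_nat_of_lt_succ fun i => ?_,
    fun i hi => ?_, by simp, by simp, fun j hj => by omega⟩
  · rcases Nat.eq_zero_or_pos i with rfl | hi
    · simpa using hab
    · simp [hi.ne']; omega
  · dsimp only; split_ifs <;> omega

lemma EndsAt.extend {χ : Finset ℕ → Bool} {N m a b c : ℕ} (h : EndsAt χ N m a b) (hbc : b < c)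
    (hc : c ≤ N) (hblue : χ {a, b, c} = false) : EndsAt χ N (m + 1) b c := by
  obtain ⟨x, hmono, hN, rfl, rfl, hx⟩ := h
  refine ⟨fun i => if i ≤ m + 1 then x i else c + (i - (m + 2)),
    strictMono_nat_of_lt_succ fun i => ?_, fun i hi => ?_, by simp, by simp, fun j hj => ?_⟩
  · have h1 := hmono (Nat.lt_succ_self i)
    split_ifs with h2 h3
    · exact h1
    · have : i = m + 1 := by omega
      subst this; omega
    · omega
    · omega
  · dsimp only
    split_ifs with h2
    · exact hN i h2
    · omega
  · by_cases hjm : j = m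
    · subst hjm; simpa using hblue
    · have h1 : j ≤ m + 1 := by omega
      have h2 : j + 1 ≤ m + 1 := by omega
      have h3 : j + 2 ≤ m + 1 := by omega
      simp only [h1, h2, h3, if_true]
      exact hx j (by omega)

lemma EndsAt.hasBlueTightPath {χ : Finset ℕ → Bool} {N m a b n : ℕ} (h : EndsAt χ N m a b)
    (hn : n ≤ m + 2) : HasBlueTightPath 3 n N χ := by
  obtain ⟨x, hmono, hN, -, -, hx⟩ := h
  refine ⟨x, hmono, fun i hi => Finset.mem_Icc.2 (hN i (by omega)), fun j hj => ?_⟩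
  have : ((Finset.range 3).image fun i => x (j + i)) = {x j, x (j + 1), x (j + 2)} := by
    ext y; simp [Finset.range_add_one]; tauto
  rw [this]
  exact hx j (by omega)

open Classical in
/-- The largest `m ≤ n` such that a blue tight path on `m + 2` vertices ends with `a, b`. -/
noncomputable def pathLabel (χ : Finset ℕ → Bool) (N n a b : ℕ) : ℕ :=
  Nat.findGreatest (fun m => EndsAt χ N m a b) n

lemma endsAt_pathLabel (χ : Finset ℕ → Bool) {N a b : ℕ} (n : ℕ) (ha : 1 ≤ a) (hab : a < b)
    (hb : b ≤ N) : EndsAt χ N (pathLabel χ N n a b) a b := by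
  classical
  exact Nat.findGreatest_spec (P := fun m => EndsAt χ N m a b) (Nat.zero_le n)
    (endsAt_zero χ ha hab hb)

lemma red_of_pathLabel {χ : Finset ℕ → Bool} {N n a b c : ℕ}
    (hno : ¬ HasBlueTightPath 3 n N χ) (ha : 1 ≤ a) (hab : a < b) (hbc : b < c) (hc : c ≤ N)
    (h : pathLabel χ N n b c ≤ pathLabel χ N n a b) : χ {a, b, c} = true := by
  classical
  by_contra hblue
  have h1 := (endsAt_pathLabel χ n ha hab (by omega : b ≤ N)).extend hbc hc (by simpa using hblue)
  have h2 : pathLabel χ N n a b + 1 ≤ n := by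
    by_contra h3
    exact hno (h1.hasBlueTightPath (by omega))
  have h3 : pathLabel χ N n a b + 1 ≤ pathLabel χ N n b c :=
    Nat.le_findGreatest (P := fun m => EndsAt χ N m b c) h2 h1
  omega

lemma redClique_of_quad {χ : Finset ℕ → Bool} {N n : ℕ} (hno : ¬ HasBlueTightPath 3 n N χ)
    (h : HasDecreasingQuad (pathLabel χ N n) N) : HasRedClique 3 4 N χ := by
  obtain ⟨a, b, c, d, ha, hab, hbc, hcd, hd, h1, h2, h3, h4⟩ := h
  have r1 := red_of_pathLabel hno ha hab hbc (by omega) h1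
  have r2 := red_of_pathLabel hno ha hab (hbc.trans hcd) hd h2
  have r3 := red_of_pathLabel hno ha (hab.trans hbc) hcd hd h3
  have r4 := red_of_pathLabel hno (by omega) hbc hcd hd h4
  have hcard : ({a, b, c, d} : Finset ℕ).card = 4 := by
    rw [Finset.card_insert_of_notMem, Finset.card_insert_of_notMem, Finset.card_pair]
    all_goals first | omega | (simp; omega)
  refine ⟨{a, b, c, d}, ?_, hcard, fun e he hec => ?_⟩
  · intro y hy
    simp only [Finset.mem_insert, Finset.mem_singleton] at hy
    rw [Finset.mem_Icc]; omega
  · obtain ⟨z, hz, hze⟩ := Finset.exists_mem_notMem_of_card_lt_card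
      (by rw [hec, hcard]; norm_num : e.card < ({a, b, c, d} : Finset ℕ).card)
    have hee : e = ({a, b, c, d} : Finset ℕ).erase z := by
      apply Finset.eq_of_subset_of_card_le
      · exact fun y hy => Finset.mem_erase.2 ⟨fun hyz => hze (hyz ▸ hy), he hy⟩
      · rw [Finset.card_erase_of_mem hz, hcard, hec]
    simp only [Finset.mem_insert, Finset.mem_singleton] at hz
    rcases hz with rfl | rfl | rfl | rfl
    · convert r4; rw [hee]; ext y; simp; omega
    · convert r3; rw [hee]; ext y; simp; omega
    · convert r2; rw [hee]; ext y; simp; omega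
    · convert r1; rw [hee]; ext y; simp; omega

/-- The Ramsey property already holds from `n ^ 20` on. -/
lemma ramsey_property {n N : ℕ} (hn : 8 ≤ n) (hN : n ^ 20 ≤ N) (χ : Finset ℕ → Bool) :
    HasRedClique 3 4 N χ ∨ HasBlueTightPath 3 n N χ := by
  by_cases hno : HasBlueTightPath 3 n N χ
  · exact Or.inr hno
  left
  obtain ⟨k, hk1, hk2⟩ : ∃ k, n + 2 ≤ 2 ^ k ∧ 2 ^ k ≤ 4 * n := by
    refine ⟨Nat.log 2 (n + 2) + 1, (Nat.lt_pow_succ_log_self (by norm_num) _).le, ?_⟩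
    have := Nat.pow_log_le_self 2 (x := n + 2) (by omega)
    rw [pow_succ]; omega
  refine redClique_of_quad hno (exists_quad (n := n) (k := k) (fun a b ha hab hb => ?_) hk1
    (le_trans ?_ hN) (by omega))
  · by_contra h
    exact hno ((endsAt_pathLabel χ n ha hab hb).hasBlueTightPath (by omega))
  · -- `18 ^ (2k) ≤ 2 ^ (9k) ≤ (4n) ^ 9`, so the left side is at most `2 ^ 21 * n ^ 11`
    have h1 : 18 ^ (k + k) ≤ (4 * n) ^ 9 := by
      calc 18 ^ (k + k) = 324 ^ k := by rw [← two_mul, pow_mul]; norm_num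
        _ ≤ 512 ^ k := Nat.pow_le_pow_left (by norm_num) k
        _ = (2 ^ k) ^ 9 := by rw [← pow_mul, mul_comm, pow_mul]; norm_num
        _ ≤ (4 * n) ^ 9 := Nat.pow_le_pow_left hk2 9
    calc (n + 2) * (4 * (n * 18 ^ (k + k))) ≤ (2 * n) * (4 * (n * (4 * n) ^ 9)) := by
          gcongr; omega
      _ = 2 ^ 21 * n ^ 11 := by ring
      _ ≤ 8 ^ 9 * n ^ 11 := Nat.mul_le_mul_right _ (by norm_num)
      _ ≤ n ^ 9 * n ^ 11 := by gcongr
      _ = n ^ 20 := by ring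

/-- For all sufficiently large `n`, `r_3(4, P_n) < n^{21}`: every
red/blue coloring of the 3-element subsets of `{1,...,n^21}` contains a red `K_4^3`
or a blue ordered 3-uniform tight path on `n` vertices. -/
theorem stmt_3 :
    ∃ n₀ : ℕ, ∀ n : ℕ, n₀ ≤ n →
      cliquePathRamsey 3 4 n < n ^ 21 ∧
      ∀ χ : Finset ℕ → Bool,
        HasRedClique 3 4 (n ^ 21) χ ∨ HasBlueTightPath 3 n (n ^ 21) χ := by
  refine ⟨8, fun n hn => ⟨?_, ramsey_property hn (Nat.pow_le_pow_right (by omega) (by norm_num))⟩⟩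
  exact lt_of_le_of_lt (Nat.sInf_le (ramsey_property hn le_rfl))
    (Nat.pow_lt_pow_right (by omega) (by norm_num))
end
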